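/- Let d ≥ 2 and let μ be a finite measure on [1,∞). Assume there exists κ_0 > 1 such that for all κ ≥ κ_0, all a ≥ κ, and all r ≥ 1 one has a^d · μ([a r, a κ]) ≤ μ([r, κ]). Let κ ≥ κ_0 and let μ_κ := μ + Σ_{i=1}^∞ 𝒯_{κ^i}(μ|_{[1,κ]}). Then for every integer j ≥ 1 and every s > 0, (𝒯_{κ^j}(μ_κ|_{(0,κ^j]}))([s,∞)) ≤ (μ_κ|_{(0,1]})([s,∞)); that is, 𝒯_{κ^j}(μ_κ|_{(0,κ^j]}) is stochastically dominated by μ_κ|_{(0,1]}. -/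

import Mathlib

open MeasureTheory

/-- The scaling operator `𝒯_m ν := m^d • (pushforward of ν under r ↦ r/m)`. -/
noncomputable def scaleMeasure (d : ℕ) (m : ℝ) (ν : Measure ℝ) : Measure ℝ :=
  (ENNReal.ofReal m) ^ d • Measure.map (fun r : ℝ => r / m) ν

/-- The multiscale radius distribution `μ_κ := μ + Σ_{i=1}^∞ 𝒯_{κ^i}(μ|_{[1,κ]})`. -/
noncomputable def multiscaleMeasure (d : ℕ) (κ : ℝ) (μ : Measure ℝ) : Measure ℝ :=
  μ + Measure.sum (fun i : ℕ => scaleMeasure d (κ ^ (i + 1)) (μ.restrict (Set.Icc 1 κ)))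

/-!
The regularity hypothesis says that `𝒯_a μ` is stochastically dominated by `μ` on `[1, κ]` for
`a ≥ κ`. Restricted to `(0, κ^j]`, the measure `μ` splits into its blocks on `[κ^n, κ^(n+1)]`,
`n < j`. Scaling such a block by `κ^n` moves it to `[1, κ]`, where it is dominated by `μ`; a further
scaling by `κ^(j-n)` turns this bound into the term of index `j - n` of `μ_κ`. The remaining part of
`𝒯_{κ^j} μ_κ` consists of the terms of `μ_κ` of index greater than `j`, unchanged.
-/

open Set

/-- Stochastic domination of measures on an ordered space, as a comparison of upper tails;
the total masses need not agree. For measures carried by `(0, ∞)` it amounts to the tails at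
`s > 0` by continuity from below. -/
def StochDominated {α : Type*} [Preorder α] [MeasurableSpace α] (ν₁ ν₂ : Measure α) : Prop :=
  ∀ s, ν₁ (Ici s) ≤ ν₂ (Ici s)

namespace StochDominated

section Preorder

variable {α : Type*} [Preorder α] [MeasurableSpace α] {ν₁ ν₂ ν₃ ν₄ : Measure α}

lemma of_le (h : ν₁ ≤ ν₂) : StochDominated ν₁ ν₂ := fun s ↦ h (Ici s)

lemma refl (ν : Measure α) : StochDominated ν ν := of_le le_rfl

lemma trans (h₁₂ : StochDominated ν₁ ν₂) (h₂₃ : StochDominated ν₂ ν₃) : StochDominated ν₁ ν₃ :=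
  fun s ↦ (h₁₂ s).trans (h₂₃ s)

lemma add (h₁₂ : StochDominated ν₁ ν₂) (h₃₄ : StochDominated ν₃ ν₄) :
    StochDominated (ν₁ + ν₃) (ν₂ + ν₄) :=
  fun s ↦ by simpa only [Measure.add_apply] using add_le_add (h₁₂ s) (h₃₄ s)

lemma sum {ι : Type*} [Countable ι] {f g : ι → Measure α} (h : ∀ i, StochDominated (f i) (g i)) :
    StochDominated (Measure.sum f) (Measure.sum g) := fun s ↦ by
  simpa only [Measure.sum_apply_of_countable] using ENNReal.tsum_le_tsum fun i ↦ h i s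

end Preorder

lemma restrict_Icc {α : Type*} [LinearOrder α] [TopologicalSpace α] [ClosedIciTopology α]
    [MeasurableSpace α] [OpensMeasurableSpace α] {ν₁ ν₂ : Measure α} {a b : α}
    (h : ∀ r ≥ a, ν₁ (Icc r b) ≤ ν₂ (Icc r b)) :
    StochDominated (ν₁.restrict (Icc a b)) (ν₂.restrict (Icc a b)) := fun s ↦ by
  have tail_eq : Ici s ∩ Icc a b = Icc (max s a) b := by
    rw [← Ici_inter_Iic, ← Ici_inter_Iic, ← inter_assoc, Ici_inter_Ici]
  simpa only [Measure.restrict_apply measurableSet_Ici, tail_eq] using h _ (le_max_right s a)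

end StochDominated

lemma Icc_subset_iUnion_fin_Icc {α : Type*} [LinearOrder α] (f : ℕ → α) {n : ℕ} (hn : 1 ≤ n) :
    Icc (f 0) (f n) ⊆ ⋃ i : Fin n, Icc (f i) (f (i + 1)) := by
  induction n, hn using Nat.le_induction with
  | base => exact subset_iUnion_of_subset 0 subset_rfl
  | succ n _ ih =>
    refine Icc_subset_Icc_union_Icc.trans (union_subset (ih.trans ?_) ?_)
    · exact iUnion_subset fun i ↦ subset_iUnion_of_subset i.castSucc subset_rfl
    · exact subset_iUnion_of_subset (Fin.last n) subset_rfl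

lemma measure_sum_eq_sum_fin_add_sum_nat {α : Type*} [MeasurableSpace α] (f : ℕ → Measure α)
    (n : ℕ) :
    Measure.sum f = Measure.sum (fun i : Fin n ↦ f i) + Measure.sum (fun i ↦ f (i + n)) := by
  ext s hs
  rw [Measure.add_apply, Measure.sum_apply _ hs, Measure.sum_apply _ hs, Measure.sum_apply _ hs,
    tsum_fintype (L := .unconditional (Fin n)), ← Finset.sum_range (fun i ↦ f i s)]
  exact (ENNReal.summable.sum_add_tsum_nat_add' (f := fun i ↦ f i s)).symm

section Scale

variable (d : ℕ) {m : ℝ} (ν : Measure ℝ)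

@[simp]
lemma scaleMeasure_one : scaleMeasure d 1 ν = ν := by
  simp [scaleMeasure]

lemma scaleMeasure_apply {s : Set ℝ} (hs : MeasurableSet s) :
    scaleMeasure d m ν s = ENNReal.ofReal m ^ d * ν ((· / m) ⁻¹' s) := by
  rw [scaleMeasure, Measure.smul_apply, Measure.map_apply (by fun_prop) hs, smul_eq_mul]

lemma scaleMeasure_scaleMeasure (hm : 0 ≤ m) (b : ℝ) :
    scaleMeasure d m (scaleMeasure d b ν) = scaleMeasure d (m * b) ν := by
  have div_div_comp : (fun r : ℝ ↦ r / m) ∘ (fun r ↦ r / b) = fun r ↦ r / (m * b) := by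
    ext r
    simp only [Function.comp_apply, div_div, mul_comm]
  rw [scaleMeasure, scaleMeasure, scaleMeasure, Measure.map_smul,
    Measure.map_map (by fun_prop) (by fun_prop), div_div_comp, smul_smul, ENNReal.ofReal_mul hm,
    mul_pow]

variable (m) in
lemma scaleMeasure_add (ν₁ ν₂ : Measure ℝ) :
    scaleMeasure d m (ν₁ + ν₂) = scaleMeasure d m ν₁ + scaleMeasure d m ν₂ := by
  rw [scaleMeasure, Measure.map_add _ _ (by fun_prop), smul_add, scaleMeasure, scaleMeasure]

variable (m) in
lemma scaleMeasure_sum {ι : Type*} (f : ι → Measure ℝ) :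
    scaleMeasure d m (Measure.sum f) = Measure.sum fun i ↦ scaleMeasure d m (f i) := by
  ext s hs
  have hs_preimage : MeasurableSet ((· / m) ⁻¹' s) := measurable_id.div_const m hs
  simp only [scaleMeasure_apply _ _ hs, Measure.sum_apply _ hs, Measure.sum_apply _ hs_preimage,
    ENNReal.tsum_mul_left]

variable {ν}

lemma scaleMeasure_apply_Icc (hm : 0 < m) (a b : ℝ) :
    scaleMeasure d m ν (Icc a b) = ENNReal.ofReal (m ^ d) * ν (Icc (m * a) (m * b)) := by
  rw [scaleMeasure_apply _ _ measurableSet_Icc, ENNReal.ofReal_pow hm.le, mul_comm m a,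
    mul_comm m b]
  exact congrArg _ (congrArg ν ((OrderIso.divRight₀ m hm).preimage_Icc a b))

lemma restrict_scaleMeasure {s : Set ℝ} (hs : MeasurableSet s) :
    (scaleMeasure d m ν).restrict s = scaleMeasure d m (ν.restrict ((· / m) ⁻¹' s)) := by
  rw [scaleMeasure, Measure.restrict_smul, Measure.restrict_map (by fun_prop) hs, scaleMeasure]

lemma restrict_Icc_scaleMeasure (hm : 0 < m) (a b : ℝ) :
    (scaleMeasure d m ν).restrict (Icc a b) =
      scaleMeasure d m (ν.restrict (Icc (a * m) (b * m))) := by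
  rw [restrict_scaleMeasure d measurableSet_Icc]
  exact congrArg (fun s ↦ scaleMeasure d m (ν.restrict s))
    ((OrderIso.divRight₀ m hm).preimage_Icc a b)

lemma restrict_Ioc_zero_one_scaleMeasure (hm : 0 < m) :
    (scaleMeasure d m ν).restrict (Ioc 0 1) = scaleMeasure d m (ν.restrict (Ioc 0 m)) := by
  have preimage_eq : (· / m) ⁻¹' Ioc 0 1 = Ioc 0 m := by
    ext r
    simp only [mem_preimage, mem_Ioc, div_pos_iff_of_pos_right hm, div_le_one hm]
  rw [restrict_scaleMeasure d measurableSet_Ioc, preimage_eq]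

lemma StochDominated.scaleMeasure {ν₁ ν₂ : Measure ℝ} (h : StochDominated ν₁ ν₂) (hm : 0 < m) :
    StochDominated (scaleMeasure d m ν₁) (scaleMeasure d m ν₂) := fun s ↦ by
  have preimage_eq : (fun r : ℝ ↦ r / m) ⁻¹' Ici s = Ici (s * m) :=
    (OrderIso.divRight₀ m hm).preimage_Ici s
  rw [scaleMeasure_apply _ _ measurableSet_Ici, scaleMeasure_apply _ _ measurableSet_Ici,
    preimage_eq]
  exact mul_le_mul_right (h _) _

end Scale

section Multiscale

variable {d : ℕ} {κ : ℝ} {μ : Measure ℝ}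

lemma multiscaleMeasure_eq_add_sum_fin_add_sum_nat (j : ℕ) :
    multiscaleMeasure d κ μ = μ +
      (Measure.sum (fun i : Fin j ↦ scaleMeasure d (κ ^ (i + 1 : ℕ)) (μ.restrict (Icc 1 κ))) +
        Measure.sum fun i ↦ scaleMeasure d (κ ^ (i + j + 1)) (μ.restrict (Icc 1 κ))) := by
  rw [multiscaleMeasure, measure_sum_eq_sum_fin_add_sum_nat _ j]

lemma scaleMeasure_pow_multiscaleMeasure (hκ : 0 ≤ κ) (j : ℕ) :
    scaleMeasure d (κ ^ j) (multiscaleMeasure d κ μ) = scaleMeasure d (κ ^ j) μ +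
      Measure.sum fun i ↦ scaleMeasure d (κ ^ (i + j + 1)) (μ.restrict (Icc 1 κ)) := by
  rw [multiscaleMeasure, scaleMeasure_add, scaleMeasure_sum]
  congr! 3 with i
  rw [scaleMeasure_scaleMeasure _ _ (by positivity), ← pow_add]
  congr 2
  omega

lemma restrict_Ioc_scaleMeasure_pow_restrict_Icc (hκ : 1 ≤ κ) (i : ℕ) :
    (scaleMeasure d (κ ^ (i + 1)) (μ.restrict (Icc 1 κ))).restrict (Ioc 0 1) =
      scaleMeasure d (κ ^ (i + 1)) (μ.restrict (Icc 1 κ)) := by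
  have Icc_subset_Ioc_pow : Icc 1 κ ⊆ Ioc 0 (κ ^ (i + 1)) := fun x hx ↦
    ⟨one_pos.trans_le hx.1, hx.2.trans (le_self_pow₀ hκ i.succ_ne_zero)⟩
  rw [restrict_Ioc_zero_one_scaleMeasure d (by positivity),
    Measure.restrict_restrict measurableSet_Ioc, inter_eq_right.mpr Icc_subset_Ioc_pow]

lemma restrict_Ioc_pow_le_sum_blocks (hμ : μ (Iio 1) = 0) {j : ℕ} (hj : 1 ≤ j) :
    μ.restrict (Ioc 0 (κ ^ j)) ≤
      Measure.sum fun n : Fin j ↦ μ.restrict (Icc (κ ^ (n : ℕ)) (κ ^ (n + 1 : ℕ))) := by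
  have one_le_ae : ∀ᵐ x ∂μ, 1 ≤ x := by
    simpa only [ae_iff, not_le] using! hμ
  have cover := Icc_subset_iUnion_fin_Icc (κ ^ ·) hj
  refine (Measure.restrict_mono_ae ?_).trans Measure.restrict_iUnion_le
  filter_upwards [one_le_ae] with x hx hx_mem
  exact cover ⟨(pow_zero κ).trans_le hx, hx_mem.2⟩

lemma scaleMeasure_pow_restrict_Icc_one_stochDominated (hκ : 1 ≤ κ)
    (hreg : ∀ a ≥ κ, ∀ r ≥ (1 : ℝ),
      ENNReal.ofReal (a ^ d) * μ (Icc (a * r) (a * κ)) ≤ μ (Icc r κ)) (n : ℕ) :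
    StochDominated ((scaleMeasure d (κ ^ n) μ).restrict (Icc 1 κ)) (μ.restrict (Icc 1 κ)) := by
  obtain rfl | hn := eq_or_ne n 0
  · simpa using StochDominated.refl _
  · refine StochDominated.restrict_Icc fun r hr ↦ ?_
    rw [scaleMeasure_apply_Icc d (by positivity)]
    exact hreg _ (le_self_pow₀ hκ hn) r hr

lemma scaleMeasure_pow_block_stochDominated (hκ : 0 < κ) {n : ℕ}
    (hdom : StochDominated ((scaleMeasure d (κ ^ n) μ).restrict (Icc 1 κ)) (μ.restrict (Icc 1 κ)))
    (k : ℕ) :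
    StochDominated (scaleMeasure d (κ ^ (k + n)) (μ.restrict (Icc (κ ^ n) (κ ^ (n + 1)))))
      (scaleMeasure d (κ ^ k) (μ.restrict (Icc 1 κ))) := by
  rw [restrict_Icc_scaleMeasure d (by positivity), one_mul, ← pow_succ'] at hdom
  simpa only [scaleMeasure_scaleMeasure _ _ (pow_nonneg hκ.le k), ← pow_add] using
    hdom.scaleMeasure d (pow_pos hκ k)

lemma scaleMeasure_pow_restrict_Ioc_stochDominated (hμ : μ (Iio 1) = 0) (hκ : 0 < κ)
    (hdom : ∀ n : ℕ,
      StochDominated ((scaleMeasure d (κ ^ n) μ).restrict (Icc 1 κ)) (μ.restrict (Icc 1 κ)))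
    {j : ℕ} (hj : 1 ≤ j) :
    StochDominated (scaleMeasure d (κ ^ j) (μ.restrict (Ioc 0 (κ ^ j))))
      (Measure.sum fun i : Fin j ↦
        scaleMeasure d (κ ^ (i + 1 : ℕ)) (μ.restrict (Icc 1 κ))) := by
  have split_blocks :=
    (StochDominated.of_le (restrict_Ioc_pow_le_sum_blocks (κ := κ) hμ hj)).scaleMeasure d
      (pow_pos hκ j)
  rw [scaleMeasure_sum] at split_blocks
  rw [← Measure.sum_comp_equiv Fin.revPerm]
  refine split_blocks.trans (StochDominated.sum fun n ↦ ?_)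
  have exponent_eq : (n.rev + 1 : ℕ) + n = j := by
    rw [Fin.val_rev]
    omega
  simpa only [exponent_eq, Function.comp_apply, Fin.revPerm_apply] using
    scaleMeasure_pow_block_stochDominated hκ (hdom n) (n.rev + 1 : ℕ)

end Multiscale

theorem stmt_5_general (d : ℕ) {μ : Measure ℝ} (hμ : μ (Iio 1) = 0) {κ : ℝ} (hκ : 1 ≤ κ)
    (hreg : ∀ a ≥ κ, ∀ r ≥ (1 : ℝ),
      ENNReal.ofReal (a ^ d) * μ (Icc (a * r) (a * κ)) ≤ μ (Icc r κ)) (j : ℕ) :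
    StochDominated
      (scaleMeasure d (κ ^ j) ((multiscaleMeasure d κ μ).restrict (Ioc 0 (κ ^ j))))
      ((multiscaleMeasure d κ μ).restrict (Ioc 0 1)) := by
  have hκ_pos : 0 < κ := by linarith
  obtain rfl | hj := j.eq_zero_or_pos
  · simpa using StochDominated.refl _
  have hdom := scaleMeasure_pow_restrict_Icc_one_stochDominated hκ hreg
  rw [← restrict_Ioc_zero_one_scaleMeasure d (by positivity),
    scaleMeasure_pow_multiscaleMeasure hκ_pos.le, Measure.restrict_add,
    restrict_Ioc_zero_one_scaleMeasure d (by positivity),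
    multiscaleMeasure_eq_add_sum_fin_add_sum_nat j]
  simp only [Measure.restrict_add, Measure.restrict_sum_of_countable,
    restrict_Ioc_scaleMeasure_pow_restrict_Icc hκ]
  have blocks_dominated := scaleMeasure_pow_restrict_Ioc_stochDominated hμ hκ_pos hdom hj
  exact (blocks_dominated.add (.refl _)).trans (.of_le (Measure.le_add_left le_rfl))

/-- Under the regularity hypothesis, for every `j ≥ 1` and `s > 0`,
`𝒯_{κ^j}(μ_κ|_{(0,κ^j]})` is stochastically dominated by `μ_κ|_{(0,1]}`. -/
theorem stmt_5 (d : ℕ) (hd : 2 ≤ d)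
    (μ : Measure ℝ) [IsFiniteMeasure μ] (hμ : μ (Set.Iio 1) = 0)
    (κ₀ : ℝ) (hκ₀ : 1 < κ₀)
    (hreg : ∀ κ ≥ κ₀, ∀ a ≥ κ, ∀ r ≥ (1 : ℝ),
      ENNReal.ofReal (a ^ d) * μ (Set.Icc (a * r) (a * κ)) ≤ μ (Set.Icc r κ))
    (κ : ℝ) (hκ : κ₀ ≤ κ) (j : ℕ) (hj : 1 ≤ j) (s : ℝ) (hs : 0 < s) :
    scaleMeasure d (κ ^ j)
        ((multiscaleMeasure d κ μ).restrict (Set.Ioc 0 (κ ^ j))) (Set.Ici s)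
      ≤ ((multiscaleMeasure d κ μ).restrict (Set.Ioc 0 1)) (Set.Ici s) :=
  stmt_5_general d hμ (hκ₀.le.trans hκ) (hreg κ hκ) j s
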